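/- Let k be a commutative ring, A an associative unital k-algebra, λ ∈ k, and a, b ∈ A with b·a = λ•(a·b) + b. Define, in the tensor product algebra A ⊗ₖ A, Δa := a ⊗ 1 + 1 ⊗ a + (λ − 1)•(a ⊗ a) and Δb := b ⊗ 1 + 1 ⊗ b + (λ − 1)•(b ⊗ a). Then Δb·Δa = λ•(Δa·Δb) + Δb. -/

import Mathlib

open TensorProduct

/-!
With `g = 1 + (l - 1) • a`, the coproducts read `Δa = a ⊗ g + 1 ⊗ a` and `Δb = b ⊗ g + 1 ⊗ b`, and
the relation between `a` and `b` makes `g` quasi-commute with `b`: `b * g = l • (g * b)`. When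
`Δb * Δa` is compared with `l • (Δa * Δb)`, this cancels the terms in `a ⊗ _`, the relation in the
left factor turns `b * a` into an extra `b ⊗ g ^ 2`, and `g * (g + a) = l • (a * g) + g` reduces the
terms in `b ⊗ _` to `b ⊗ g`. The two tensor factors play independent roles, so they may be taken
in different algebras.
-/

namespace VectorFieldRelation

section GroupLike

variable {k A : Type*} [CommRing k] [Semiring A] [Algebra k A]

/-- The element `1 + (l - 1) • a`, which is group-like for the coproduct
`Δa = a ⊗ 1 + 1 ⊗ a + (l - 1) • (a ⊗ a)`. -/
def groupLike (l : k) (a : A) : A := 1 + (l - 1) • a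

theorem commute_groupLike (l : k) (a : A) : Commute a (groupLike l a) :=
  (Commute.one_right a).add_right ((Commute.refl a).smul_right (l - 1))

theorem groupLike_add_self (l : k) (a : A) : groupLike l a + a = l • a + 1 := by
  unfold groupLike
  module

theorem groupLike_mul_groupLike_add_self (l : k) (a : A) :
    groupLike l a * (groupLike l a + a) = l • (a * groupLike l a) + groupLike l a := by
  rw [groupLike_add_self, mul_add, mul_one, mul_smul_comm, (commute_groupLike l a).eq]

theorem mul_groupLike {l : k} {a b : A} (hrel : b * a = l • (a * b) + b) :
    b * groupLike l a = l • (groupLike l a * b) := by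
  simp only [groupLike, mul_add, add_mul, mul_one, one_mul, mul_smul_comm, smul_mul_assoc, hrel]
  module

end GroupLike

section TensorProduct

variable {k A B : Type*} [CommRing k] [Semiring A] [Algebra k A] [Semiring B] [Algebra k B]

theorem tmul_one_add_one_tmul_add_smul_tmul (l : k) (x : A) (y c : B) :
    x ⊗ₜ[k] (1 : B) + (1 : A) ⊗ₜ[k] y + (l - 1) • (x ⊗ₜ[k] c) =
      x ⊗ₜ[k] groupLike l c + (1 : A) ⊗ₜ[k] y := by
  rw [groupLike, tmul_add, tmul_smul, add_right_comm]

theorem tmul_groupLike_add_mul {l : k} {a b : A} {c d : B}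
    (hab : b * a = l • (a * b) + b) (hcd : d * c = l • (c * d) + d) :
    (b ⊗ₜ[k] groupLike l c + (1 : A) ⊗ₜ[k] d) * (a ⊗ₜ[k] groupLike l c + (1 : A) ⊗ₜ[k] c) =
      l • ((a ⊗ₜ[k] groupLike l c + (1 : A) ⊗ₜ[k] c) *
        (b ⊗ₜ[k] groupLike l c + (1 : A) ⊗ₜ[k] d)) +
      (b ⊗ₜ[k] groupLike l c + (1 : A) ⊗ₜ[k] d) := by
  have hdg : d * groupLike l c = l • (groupLike l c * d) := mul_groupLike hcd
  have hg := groupLike_mul_groupLike_add_self l c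
  set g := groupLike l c
  calc (b ⊗ₜ[k] g + (1 : A) ⊗ₜ[k] d) * (a ⊗ₜ[k] g + (1 : A) ⊗ₜ[k] c)
      = (b * a) ⊗ₜ[k] (g * g) + b ⊗ₜ[k] (g * c) + a ⊗ₜ[k] (d * g) + (1 : A) ⊗ₜ[k] (d * c) := by
        simp only [mul_add, add_mul, Algebra.TensorProduct.tmul_mul_tmul, one_mul, mul_one]
        abel
    _ = l • ((a * b) ⊗ₜ[k] (g * g) + a ⊗ₜ[k] (g * d) + (1 : A) ⊗ₜ[k] (c * d)) +
          b ⊗ₜ[k] (g * (g + c)) + (1 : A) ⊗ₜ[k] d := by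
        simp only [hab, hcd, hdg, mul_add, add_tmul, tmul_add, ← smul_tmul', tmul_smul]
        module
    _ = l • ((a * b) ⊗ₜ[k] (g * g) + a ⊗ₜ[k] (g * d) + b ⊗ₜ[k] (c * g) +
          (1 : A) ⊗ₜ[k] (c * d)) + (b ⊗ₜ[k] g + (1 : A) ⊗ₜ[k] d) := by
        rw [hg, tmul_add, tmul_smul]
        module
    _ = l • ((a ⊗ₜ[k] g + (1 : A) ⊗ₜ[k] c) * (b ⊗ₜ[k] g + (1 : A) ⊗ₜ[k] d)) +
          (b ⊗ₜ[k] g + (1 : A) ⊗ₜ[k] d) := by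
        simp only [mul_add, add_mul, Algebra.TensorProduct.tmul_mul_tmul, one_mul, mul_one]
        module

end TensorProduct

end VectorFieldRelation

theorem coproduct_preserves_vector_field_relation_general {k A B : Type*} [CommRing k]
    [Semiring A] [Algebra k A] [Semiring B] [Algebra k B] (l : k) (a b : A) (c d : B)
    (hab : b * a = l • (a * b) + b) (hcd : d * c = l • (c * d) + d) :
    let X : A ⊗[k] B := a ⊗ₜ[k] (1 : B) + (1 : A) ⊗ₜ[k] c + (l - 1) • (a ⊗ₜ[k] c)
    let Y : A ⊗[k] B := b ⊗ₜ[k] (1 : B) + (1 : A) ⊗ₜ[k] d + (l - 1) • (b ⊗ₜ[k] c)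
    Y * X = l • (X * Y) + Y := by
  simpa only [VectorFieldRelation.tmul_one_add_one_tmul_add_smul_tmul] using
    VectorFieldRelation.tmul_groupLike_add_mul hab hcd

theorem coproduct_preserves_vector_field_relation {k : Type*} [CommRing k]
    {A : Type*} [Ring A] [Algebra k A] (l : k) (a b : A)
    (hrel : b * a = l • (a * b) + b) :
    let Δa : A ⊗[k] A := a ⊗ₜ[k] (1 : A) + (1 : A) ⊗ₜ[k] a + (l - 1) • (a ⊗ₜ[k] a)
    let Δb : A ⊗[k] A := b ⊗ₜ[k] (1 : A) + (1 : A) ⊗ₜ[k] b + (l - 1) • (b ⊗ₜ[k] a)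
    Δb * Δa = l • (Δa * Δb) + Δb :=
  coproduct_preserves_vector_field_relation_general l a b a b hrel hrel
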